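/- Fix T > 0, ε ∈ (0,1/2), ν ≥ 0, and suppose |w(t)| ≤ M for all t ∈ [0,T] and that the energy-dissipation balance E(t) + A(t) + ∫_{ℓ₀}^{ℓ(t)} κ(σ)dσ + W(t) = E(0) holds for all t ≥ 0. Then the modified energy Ẽ(t) := ½∫₀^{ℓ(t)}( ε²u_t(t,σ)² + (u_x(t,σ) − r_x(t,σ))² )dσ satisfies Ẽ(t) = E(t) − ½·w(t)²/ℓ(t), Ẽ is absolutely continuous on [0,T], and there exists a constant C > 0, depending only on M and ℓ₀, such that for a.e. t ∈ (0,T): Ẽ'(t) ≤ −ν∫₀^{ℓ(t)} ε·u_t(t,σ)²dσ + C( ℓ'(t) + ẇ(t)² + u_x(t,0)² + 1 ). -/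

import Mathlib

/-!
Expanding the square in `Ẽ`, the cross term is `(w/ℓ) ∫ u_x = -w²/ℓ` because `u(t,ℓ(t)) = 0`, which
gives `Ẽ = E - ½ w²/ℓ`. The energy balance then replaces `E`, so that on `[0,∞)`
`Ẽ = E(0) - A - ∫_{ℓ₀}^{ℓ} κ - W - ½ w²/ℓ`.
Every term on the right is absolutely continuous on `[0,T]`: `A` and `W` are integrals of continuous
functions of time (for `A` the moving domain is rescaled to `[0,1]`, see
`continuousOn_integral_moving`), and the other two are built from `C¹` functions and the Lipschitz
function `ℓ`. At each time where `ℓ` is differentiable,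
`Ẽ' = -ν ∫ ε u_t² - κ(ℓ) ℓ' - ẇ u_x(·,0) - w ẇ/ℓ + ½ w² ℓ'/ℓ²`,
and the bound follows from `κ > 0`, `ℓ' ≥ 0`, `|w| ≤ M`, `ℓ ≥ ℓ₀` and Young's inequality.
-/


open MeasureTheory Set

/-- Partial derivative in time. -/
noncomputable def pt (u : ℝ → ℝ → ℝ) (t x : ℝ) : ℝ := deriv (fun s => u s x) t

/-- Partial derivative in space. -/
noncomputable def px (u : ℝ → ℝ → ℝ) (t x : ℝ) : ℝ := deriv (fun y => u t y) x

/-- Second partial derivative in time. -/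
noncomputable def ptt (u : ℝ → ℝ → ℝ) (t x : ℝ) : ℝ := deriv (fun s => pt u s x) t

/-- Second partial derivative in space. -/
noncomputable def pxx (u : ℝ → ℝ → ℝ) (t x : ℝ) : ℝ := deriv (fun y => px u t y) x

/-- Kinetic plus potential energy `E(t)`. -/
noncomputable def En (ε : ℝ) (ℓ : ℝ → ℝ) (u : ℝ → ℝ → ℝ) (t : ℝ) : ℝ :=
  (1/2) * ∫ σ in (0:ℝ)..ℓ t, (ε ^ 2 * (pt u t σ) ^ 2 + (px u t σ) ^ 2)

/-- Energy dissipated by friction `A(t)`. -/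
noncomputable def Afr (ε ν : ℝ) (ℓ : ℝ → ℝ) (u : ℝ → ℝ → ℝ) (t : ℝ) : ℝ :=
  ν * ∫ τ in (0:ℝ)..t, ∫ σ in (0:ℝ)..ℓ τ, ε * (pt u τ σ) ^ 2

/-- Work of the external loading `W(t)` (with `ẇ(τ) = u_t(τ,0)`). -/
noncomputable def Wk (u : ℝ → ℝ → ℝ) (t : ℝ) : ℝ :=
  ∫ τ in (0:ℝ)..t, pt u τ 0 * px u τ 0

/-- The modified energy `Ẽ(t) = ½∫₀^{ℓ(t)} (ε²u_t² + (u_x − r_x)²)`, where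
`r(t,x) = w(t)(1 − x/ℓ(t))` is the affine profile, so `r_x(t,x) = −w(t)/ℓ(t)`. -/
noncomputable def Emod (ε : ℝ) (ℓ : ℝ → ℝ) (u : ℝ → ℝ → ℝ) (t : ℝ) : ℝ :=
  (1/2) * ∫ σ in (0:ℝ)..ℓ t,
    (ε ^ 2 * (pt u t σ) ^ 2 + (px u t σ + u t 0 / ℓ t) ^ 2)

/-- The closed domain `{t ≥ 0, 0 ≤ x ≤ ℓ(t)}` lies in the closure of `Ω`. Since `ℓ` is nondecreasing,
moving forward in time while contracting towards `ℓ(t)/2` stays inside `Ω`. -/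
lemma mem_closure_domain {l0 : ℝ} (hl0 : 0 < l0) {ℓ : ℝ → ℝ} (hmono : MonotoneOn ℓ (Ici 0))
    (hge : ∀ t ≥ (0:ℝ), l0 ≤ ℓ t) {t x : ℝ} (ht : 0 ≤ t) (hx : 0 ≤ x) (hxl : x ≤ ℓ t) :
    ((t, x) : ℝ × ℝ) ∈ closure {p : ℝ × ℝ | 0 < p.1 ∧ 0 < p.2 ∧ p.2 < ℓ p.1} := by
  have hpos : 0 < ℓ t := hl0.trans_le (hge t ht)
  have hlim : Filter.Tendsto (fun s : ℝ => ((t + s, x + s * (ℓ t / 2 - x)) : ℝ × ℝ))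
      (nhdsWithin 0 (Ioi 0)) (nhds (t, x)) := by
    have hc : Continuous (fun s : ℝ => ((t + s, x + s * (ℓ t / 2 - x)) : ℝ × ℝ)) := by fun_prop
    have := hc.tendsto 0
    simp only [add_zero, zero_mul] at this
    exact this.mono_left nhdsWithin_le_nhds
  refine mem_closure_of_tendsto hlim ?_
  filter_upwards [Ioo_mem_nhdsGT (zero_lt_one' ℝ)] with s hs
  have h1 : ℓ t ≤ ℓ (t + s) := hmono ht (by simp only [mem_Ici]; linarith [hs.1]) (by linarith [hs.1])
  have h2 := mul_pos hs.1 hpos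
  have h3 := mul_nonneg (sub_pos.2 hs.2).le hx
  have h4 := mul_nonneg (sub_pos.2 hs.2).le (sub_nonneg.2 hxl)
  refine ⟨?_, ?_, lt_of_lt_of_le ?_ h1⟩
  · linarith [hs.1]
  · nlinarith
  · change x + s * (ℓ t / 2 - x) < ℓ t
    nlinarith

lemma hasDerivAt_pt {u : ℝ → ℝ → ℝ} {U : Set (ℝ × ℝ)} (hU : IsOpen U)
    (hu : ContDiffOn ℝ 2 (fun p : ℝ × ℝ => u p.1 p.2) U) {t x : ℝ} (h : (t, x) ∈ U) :
    HasDerivAt (fun s => u s x) (fderiv ℝ (fun p : ℝ × ℝ => u p.1 p.2) (t, x) (1, 0)) t := by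
  have hd := ((hu.contDiffAt (hU.mem_nhds h)).differentiableAt (by norm_num)).hasFDerivAt
  have hg : HasDerivAt (fun s : ℝ => ((s, x) : ℝ × ℝ)) (1, 0) t :=
    (hasDerivAt_id t).prodMk (hasDerivAt_const t x)
  exact HasFDerivAt.comp_hasDerivAt (f := fun s : ℝ => ((s, x) : ℝ × ℝ)) t hd hg

lemma hasDerivAt_px {u : ℝ → ℝ → ℝ} {U : Set (ℝ × ℝ)} (hU : IsOpen U)
    (hu : ContDiffOn ℝ 2 (fun p : ℝ × ℝ => u p.1 p.2) U) {t x : ℝ} (h : (t, x) ∈ U) :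
    HasDerivAt (fun y => u t y) (fderiv ℝ (fun p : ℝ × ℝ => u p.1 p.2) (t, x) (0, 1)) x := by
  have hd := ((hu.contDiffAt (hU.mem_nhds h)).differentiableAt (by norm_num)).hasFDerivAt
  have hg : HasDerivAt (fun s : ℝ => ((t, s) : ℝ × ℝ)) (0, 1) x :=
    (hasDerivAt_const x t).prodMk (hasDerivAt_id x)
  exact HasFDerivAt.comp_hasDerivAt (f := fun s : ℝ => ((t, s) : ℝ × ℝ)) x hd hg

lemma continuousOn_pt {u : ℝ → ℝ → ℝ} {U : Set (ℝ × ℝ)} (hU : IsOpen U)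
    (hu : ContDiffOn ℝ 2 (fun p : ℝ × ℝ => u p.1 p.2) U) :
    ContinuousOn (fun p : ℝ × ℝ => pt u p.1 p.2) U := by
  have h1 : ContinuousOn (fun p => fderiv ℝ (fun p : ℝ × ℝ => u p.1 p.2) p (1, 0)) U :=
    (hu.continuousOn_fderiv_of_isOpen hU (by norm_num)).clm_apply continuousOn_const
  exact h1.congr fun p hp => (hasDerivAt_pt hU hu (t := p.1) (x := p.2) hp).deriv

lemma continuousOn_px {u : ℝ → ℝ → ℝ} {U : Set (ℝ × ℝ)} (hU : IsOpen U)
    (hu : ContDiffOn ℝ 2 (fun p : ℝ × ℝ => u p.1 p.2) U) :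
    ContinuousOn (fun p : ℝ × ℝ => px u p.1 p.2) U := by
  have h1 : ContinuousOn (fun p => fderiv ℝ (fun p : ℝ × ℝ => u p.1 p.2) p (0, 1)) U :=
    (hu.continuousOn_fderiv_of_isOpen hU (by norm_num)).clm_apply continuousOn_const
  exact h1.congr fun p hp => (hasDerivAt_px hU hu (t := p.1) (x := p.2) hp).deriv

/-- Integrals over the moving interval `[0, ℓ(t)]` depend continuously on `t`. The substitution
`x = ℓ(t) s` moves them to `[0,1]`, and clamping `t` and `s` makes the integrand continuous on the
whole plane. -/
lemma continuousOn_integral_moving {ℓ : ℝ → ℝ} (hℓ : ContinuousOn ℓ (Ici 0))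
    (hpos : ∀ t ≥ (0:ℝ), 0 < ℓ t) {g : ℝ → ℝ → ℝ}
    (hg : ContinuousOn (fun p : ℝ × ℝ => g p.1 p.2) {p | 0 ≤ p.1 ∧ 0 ≤ p.2 ∧ p.2 ≤ ℓ p.1}) :
    ContinuousOn (fun t => ∫ x in (0:ℝ)..ℓ t, g t x) (Ici 0) := by
  let L : ℝ → ℝ := fun t => ℓ (max t 0)
  have hL : Continuous L :=
    hℓ.comp_continuous (by fun_prop) (fun t => le_max_right t 0)
  have hLpos : ∀ t, 0 < L t := fun t => hpos _ (le_max_right t 0)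
  have hc : Continuous (fun q : ℝ × ℝ => g (max q.1 0) (L q.1 * max 0 (min q.2 1))) := by
    have hφ : Continuous (fun q : ℝ × ℝ =>
        ((max q.1 0, L q.1 * max 0 (min q.2 1)) : ℝ × ℝ)) := by fun_prop
    refine hg.comp_continuous hφ fun q => ?_
    have h0 : 0 ≤ max 0 (min q.2 1) := le_max_left _ _
    have h1 : max 0 (min q.2 1) ≤ 1 := max_le zero_le_one (min_le_right _ _)
    refine ⟨le_max_right _ _, mul_nonneg (hLpos _).le h0, ?_⟩
    exact mul_le_of_le_one_right (hLpos q.1).le h1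
  have hI : Continuous (fun t : ℝ => L t * ∫ s in (0:ℝ)..1,
      g (max t 0) (L t * max 0 (min s 1))) :=
    hL.mul (intervalIntegral.continuous_parametric_intervalIntegral_of_continuous'
      (f := fun t s => g (max t 0) (L t * max 0 (min s 1))) hc 0 1)
  refine hI.continuousOn.congr fun t ht => ?_
  have ht' : max t 0 = t := max_eq_left ht
  have hLt : L t = ℓ t := by simp only [L, ht']
  simp only [hLt, ht']
  have : ∫ s in (0:ℝ)..1, g t (ℓ t * max 0 (min s 1)) = ∫ s in (0:ℝ)..1, g t (ℓ t * s) := by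
    refine intervalIntegral.integral_congr fun s hs => ?_
    rw [uIcc_of_le zero_le_one] at hs
    simp only [min_eq_left hs.2, max_eq_right hs.1]
  rw [this, intervalIntegral.mul_integral_comp_mul_left]
  simp

/-- For `h` continuous on `[a,∞)`, its primitive is absolutely continuous on `[a,T]` and
differentiable at every time `t > a`. -/
lemma primitive_facts {h : ℝ → ℝ} {a : ℝ} (hh : ContinuousOn h (Ici a)) {T : ℝ} (hT : a ≤ T) :
    AbsolutelyContinuousOnInterval (fun t => ∫ s in a..t, h s) a T ∧
      ∀ t, a < t → HasDerivAt (fun t => ∫ s in a..t, h s) (h t) t := by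
  have hint : ∀ t, a ≤ t → IntervalIntegrable h volume a t := fun t ht =>
    (hh.mono (by rw [uIcc_of_le ht]; exact Icc_subset_Ici_self)).intervalIntegrable
  refine ⟨(hint T hT).absolutelyContinuousOnInterval_intervalIntegral left_mem_uIcc, fun t ht => ?_⟩
  refine intervalIntegral.integral_hasDerivAt_right (hint t ht.le) ?_
    (hh.continuousAt (Ici_mem_nhds ht))
  exact (hh.mono Ioi_subset_Ici_self).stronglyMeasurableAtFilter isOpen_Ioi t ht

/-- The primitive of `κ` composed with a Lipschitz nondecreasing `ℓ ≥ ℓ₀`. As `κ` is only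
controlled on `[ℓ₀,∞)`, it is extended below `ℓ₀` by the constant `κ(ℓ₀)`, which leaves the integrals
unchanged. -/
lemma toughness_facts {l0 : ℝ} {ℓ κ : ℝ → ℝ} {K : NNReal} (hK : LipschitzOnWith K ℓ (Ici 0))
    (hmono : MonotoneOn ℓ (Ici 0)) (hge : ∀ t ≥ (0:ℝ), l0 ≤ ℓ t)
    (hκ : ContinuousOn κ (Ici l0)) {T : ℝ} (hT : 0 ≤ T) :
    AbsolutelyContinuousOnInterval (fun t => ∫ σ in l0..ℓ t, κ σ) 0 T ∧
      ∀ t d, 0 < t → HasDerivAt ℓ d t →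
        HasDerivAt (fun t => ∫ σ in l0..ℓ t, κ σ) (κ (ℓ t) * d) t := by
  let k : ℝ → ℝ := fun x => κ (max x l0)
  have hk : Continuous k := hκ.comp_continuous (by fun_prop) (fun x => le_max_right x l0)
  let H : ℝ → ℝ := fun y => ∫ σ in l0..y, k σ
  have hH : ∀ y, HasDerivAt H (k y) y := fun y =>
    intervalIntegral.integral_hasDerivAt_right (hk.intervalIntegrable _ _)
      (hk.stronglyMeasurableAtFilter _ _) hk.continuousAt
  have hHC : ContDiff ℝ 1 H := by
    rw [contDiff_one_iff_deriv]
    refine ⟨fun y => (hH y).differentiableAt, ?_⟩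
    have : deriv H = k := funext fun y => (hH y).deriv
    rwa [this]
  have heq : ∀ t ≥ (0:ℝ), ∫ σ in l0..ℓ t, κ σ = H (ℓ t) := fun t ht => by
    refine intervalIntegral.integral_congr fun s hs => ?_
    rw [uIcc_of_le (hge t ht)] at hs
    simp only [k, max_eq_left hs.1]
  constructor
  · obtain ⟨C, hC⟩ := hHC.contDiffOn.exists_lipschitzOnWith (by norm_num)
      (convex_Icc l0 (ℓ T)) isCompact_Icc
    have hmaps : MapsTo ℓ (uIcc 0 T) (Icc l0 (ℓ T)) := fun t ht => by
      rw [uIcc_of_le hT] at ht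
      exact ⟨hge t ht.1, hmono ht.1 hT ht.2⟩
    have h1 : LipschitzOnWith (C * K) (H ∘ ℓ) (uIcc 0 T) :=
      hC.comp (hK.mono (by rw [uIcc_of_le hT]; exact Icc_subset_Ici_self)) hmaps
    refine LipschitzOnWith.absolutelyContinuousOnInterval (K := C * K) fun x hx y hy => ?_
    have hx' := hx
    have hy' := hy
    rw [uIcc_of_le hT] at hx' hy'
    simp only [heq x hx'.1, heq y hy'.1]
    exact h1 hx hy
  · intro t d ht hd
    have h1 := (hH (ℓ t)).comp t hd
    have h2 : k (ℓ t) = κ (ℓ t) := by simp only [k, max_eq_left (hge t ht.le)]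
    rw [h2] at h1
    refine h1.congr_of_eventuallyEq ?_
    filter_upwards [Ioi_mem_nhds ht] with s hs using heq s (le_of_lt hs)

lemma absolutelyContinuousOnInterval_congr {f g : ℝ → ℝ} {a b : ℝ}
    (hf : AbsolutelyContinuousOnInterval f a b) (h : EqOn g f (uIcc a b)) :
    AbsolutelyContinuousOnInterval g a b := by
  rw [absolutelyContinuousOnInterval_iff] at hf ⊢
  intro ε hε
  obtain ⟨δ, hδ, H⟩ := hf ε hε
  refine ⟨δ, hδ, fun E hE hlt => ?_⟩
  refine lt_of_eq_of_lt (Finset.sum_congr rfl fun i hi => ?_) (H E hE hlt)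
  have := hE.1 i hi
  rw [h this.1, h this.2]

lemma inv_absolutelyContinuous {l0 : ℝ} (hl0 : 0 < l0) {ℓ : ℝ → ℝ} {K : NNReal}
    (hK : LipschitzOnWith K ℓ (Ici 0)) (hmono : MonotoneOn ℓ (Ici 0))
    (hge : ∀ t ≥ (0:ℝ), l0 ≤ ℓ t) {T : ℝ} (hT : 0 ≤ T) :
    AbsolutelyContinuousOnInterval (fun t => (ℓ t)⁻¹) 0 T := by
  have hinv : ContDiffOn ℝ 1 (fun y : ℝ => y⁻¹) (Icc l0 (ℓ T)) :=
    contDiffOn_id.inv fun y hy => (hl0.trans_le hy.1).ne'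
  obtain ⟨C, hC⟩ := hinv.exists_lipschitzOnWith (by norm_num) (convex_Icc l0 (ℓ T)) isCompact_Icc
  have hmaps : MapsTo ℓ (uIcc 0 T) (Icc l0 (ℓ T)) := fun t ht => by
    rw [uIcc_of_le hT] at ht
    exact ⟨hge t ht.1, hmono ht.1 hT ht.2⟩
  exact (hC.comp (hK.mono (by rw [uIcc_of_le hT]; exact Icc_subset_Ici_self))
    hmaps).absolutelyContinuousOnInterval

/-- The pointwise inequality behind the derivative bound: `k = κ(ℓ)`, `d = ℓ'`, `p = ẇ`,
`q = u_x(t,0)`. -/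
lemma derivative_bound {l0 M L w p q d k D : ℝ} (hl0 : 0 < l0) (hM : 0 < M) (hL : l0 ≤ L)
    (hw : |w| ≤ M) (hd : 0 ≤ d) (hk : 0 < k) :
    -D - k * d - p * q - (w * p / L - (1/2) * w ^ 2 * d / L ^ 2)
      ≤ -D + (1 + M / l0 + M ^ 2 / l0 ^ 2) * (d + p ^ 2 + q ^ 2 + 1) := by
  have hLp : 0 < L := hl0.trans_le hL
  have h1 : 0 ≤ k * d := by positivity
  have h2 : -(p * q) ≤ p ^ 2 + q ^ 2 := by nlinarith [sq_nonneg (p + q), sq_nonneg p, sq_nonneg q]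
  have h3 : -(w * p / L) ≤ M / l0 * (p ^ 2 + 1) := by
    calc -(w * p / L) ≤ |w * p / L| := neg_le_abs _
      _ = |w| / L * |p| := by rw [abs_div, abs_mul, abs_of_pos hLp]; ring
      _ ≤ M / l0 * (p ^ 2 + 1) := by
        gcongr
        nlinarith [sq_nonneg (|p| - 1), sq_abs p, abs_nonneg p]
  have h4 : (1/2) * w ^ 2 * d / L ^ 2 ≤ M ^ 2 / l0 ^ 2 * d := by
    have hw2 : w ^ 2 ≤ M ^ 2 := sq_le_sq' (abs_le.1 hw).1 (abs_le.1 hw).2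
    have : w ^ 2 / L ^ 2 ≤ M ^ 2 / l0 ^ 2 := by gcongr
    have h5 : 0 ≤ w ^ 2 / L ^ 2 * d := by positivity
    calc (1/2) * w ^ 2 * d / L ^ 2 = (1/2) * (w ^ 2 / L ^ 2 * d) := by ring
      _ ≤ w ^ 2 / L ^ 2 * d := by linarith
      _ ≤ _ := by gcongr
  have h6 : 0 ≤ M / l0 * (d + q ^ 2) := by positivity
  have h7 : 0 ≤ M ^ 2 / l0 ^ 2 * (p ^ 2 + q ^ 2 + 1) := by positivity
  nlinarith

/-- Lemma 3.5 of the paper. With `|w| ≤ M` on `[0,T]` and the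
energy-dissipation balance, the modified energy satisfies `Ẽ = E − ½w²/ℓ`, it is
absolutely continuous on `[0,T]`, and its a.e. derivative satisfies
`Ẽ' ≤ −ν∫εu_t² + C(ℓ' + ẇ² + u_x(·,0)² + 1)` with `C` depending only on `M, ℓ₀`. -/
theorem stmt12
    (l0 M : ℝ) (hl0 : 0 < l0) (hM : 0 < M) :
    ∃ C > (0:ℝ),
      ∀ ε ν T : ℝ, 0 < ε → ε < 1/2 → 0 ≤ ν → 0 < T →
      ∀ ℓ : ℝ → ℝ,
        (∃ K : NNReal, LipschitzOnWith K ℓ (Ici 0)) →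
        MonotoneOn ℓ (Ici 0) → ℓ 0 = l0 → (∀ t ≥ (0:ℝ), l0 ≤ ℓ t) →
        (∀ᵐ t ∂volume, t ∈ Ioi (0:ℝ) → ∀ d, HasDerivAt ℓ d t → d < 1/ε) →
      ∀ κ : ℝ → ℝ, ContinuousOn κ (Ici l0) → (∀ x ≥ l0, 0 < κ x) →
      ∀ u : ℝ → ℝ → ℝ,
        (∃ U : Set (ℝ × ℝ), IsOpen U ∧
          closure {p : ℝ × ℝ | 0 < p.1 ∧ 0 < p.2 ∧ p.2 < ℓ p.1} ⊆ U ∧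
          ContDiffOn ℝ 2 (fun p : ℝ × ℝ => u p.1 p.2) U) →
        (∀ t x : ℝ, 0 < t → 0 < x → x < ℓ t →
          ε ^ 2 * ptt u t x - pxx u t x + ν * ε * pt u t x = 0) →
        (∀ t ≥ (0:ℝ), u t (ℓ t) = 0) →
        (∀ t ∈ Icc (0:ℝ) T, |u t 0| ≤ M) →
        (∀ t ≥ (0:ℝ), En ε ℓ u t + Afr ε ν ℓ u t + (∫ σ in l0..ℓ t, κ σ) + Wk u t
          = En ε ℓ u 0) →
        (∀ t ≥ (0:ℝ), Emod ε ℓ u t = En ε ℓ u t - (1/2) * (u t 0) ^ 2 / ℓ t)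
        ∧ (IntervalIntegrable (deriv (Emod ε ℓ u)) volume 0 T
            ∧ ∀ t ∈ Icc (0:ℝ) T,
                Emod ε ℓ u t = Emod ε ℓ u 0 + ∫ s in (0:ℝ)..t, deriv (Emod ε ℓ u) s)
        ∧ (∀ᵐ t ∂volume, t ∈ Ioo (0:ℝ) T →
            deriv (Emod ε ℓ u) t
              ≤ -(ν * ∫ σ in (0:ℝ)..ℓ t, ε * (pt u t σ) ^ 2)
                + C * (deriv ℓ t + (pt u t 0) ^ 2 + (px u t 0) ^ 2 + 1)) := by
  refine ⟨1 + M / l0 + M ^ 2 / l0 ^ 2, by positivity, ?_⟩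
  intro ε ν T hε _ hν hT ℓ hLip hmono hℓ0 hge _ κ hκ hκpos u hu _ hbd hw hbal
  obtain ⟨K, hK⟩ := hLip
  obtain ⟨U, hU, hcl, hu⟩ := hu
  have hpos : ∀ t ≥ (0:ℝ), 0 < ℓ t := fun t ht => hl0.trans_le (hge t ht)
  have hmem : ∀ t x : ℝ, 0 ≤ t → 0 ≤ x → x ≤ ℓ t → ((t, x) : ℝ × ℝ) ∈ U :=
    fun t x ht hx hxl => hcl (mem_closure_domain hl0 hmono hge ht hx hxl)
  have hmem0 : ∀ t : ℝ, 0 ≤ t → ((t, 0) : ℝ × ℝ) ∈ U :=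
    fun t ht => hmem t 0 ht le_rfl (hpos t ht).le
  have hptc := continuousOn_pt hU hu
  have hpxc := continuousOn_px hU hu
  have hEmod : ∀ t ≥ (0:ℝ), Emod ε ℓ u t = En ε ℓ u t - (1/2) * (u t 0) ^ 2 / ℓ t := by
    intro t ht
    have hL := hpos t ht
    have hsub : MapsTo (fun x : ℝ => ((t, x) : ℝ × ℝ)) (uIcc 0 (ℓ t)) U := fun x hx => by
      rw [uIcc_of_le hL.le] at hx
      exact hmem t x ht hx.1 hx.2
    have hline : ContinuousOn (fun x : ℝ => ((t, x) : ℝ × ℝ)) (uIcc 0 (ℓ t)) := by fun_prop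
    have c1 : ContinuousOn (fun x => pt u t x) (uIcc 0 (ℓ t)) := hptc.comp hline hsub
    have c2 : ContinuousOn (fun x => px u t x) (uIcc 0 (ℓ t)) := hpxc.comp hline hsub
    have hftc : ∫ x in (0:ℝ)..ℓ t, px u t x = - u t 0 := by
      rw [intervalIntegral.integral_eq_sub_of_hasDerivAt (f := fun x => u t x)
        (f' := fun x => px u t x) (fun x hx => (hasDerivAt_px hU hu (hsub hx)).differentiableAt.hasDerivAt)
        c2.intervalIntegrable, hbd t ht, zero_sub]
    have hsplit : ∀ σ : ℝ, ε ^ 2 * (pt u t σ) ^ 2 + (px u t σ + u t 0 / ℓ t) ^ 2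
        = (ε ^ 2 * (pt u t σ) ^ 2 + (px u t σ) ^ 2)
          + (2 * (u t 0 / ℓ t) * px u t σ + (u t 0 / ℓ t) ^ 2) := fun σ => by ring
    have i1 : IntervalIntegrable (fun σ => ε ^ 2 * (pt u t σ) ^ 2 + (px u t σ) ^ 2)
        volume 0 (ℓ t) := by
      apply ContinuousOn.intervalIntegrable; fun_prop
    have i2 : IntervalIntegrable (fun σ => 2 * (u t 0 / ℓ t) * px u t σ) volume 0 (ℓ t) := by
      apply ContinuousOn.intervalIntegrable; fun_prop
    have i3 : IntervalIntegrable (fun _ : ℝ => (u t 0 / ℓ t) ^ 2) volume 0 (ℓ t) :=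
      intervalIntegrable_const
    unfold Emod En
    simp only [hsplit]
    rw [intervalIntegral.integral_add i1 (i2.add i3), intervalIntegral.integral_add i2 i3,
      intervalIntegral.integral_const_mul, hftc, intervalIntegral.integral_const]
    simp only [sub_zero, smul_eq_mul]
    field_simp
    ring
  have hrow : ContinuousOn (fun t : ℝ => ((t, 0) : ℝ × ℝ)) (Ici 0) := by fun_prop
  have hpt0 : ContinuousOn (fun t => pt u t 0) (Ici 0) := hptc.comp hrow fun t ht => hmem0 t ht
  have hpx0 : ContinuousOn (fun t => px u t 0) (Ici 0) := hpxc.comp hrow fun t ht => hmem0 t ht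
  have hacont : ContinuousOn (fun t => ∫ σ in (0:ℝ)..ℓ t, ε * (pt u t σ) ^ 2) (Ici 0) := by
    refine continuousOn_integral_moving (g := fun t x => ε * (pt u t x) ^ 2) hK.continuousOn hpos ?_
    exact ((hptc.mono fun p hp => hmem p.1 p.2 hp.1 hp.2.1 hp.2.2).pow 2).const_smul ε
  obtain ⟨hA_ac, hA_d⟩ := primitive_facts hacont hT.le
  obtain ⟨hW_ac, hW_d⟩ := primitive_facts (hpt0.mul hpx0) hT.le
  obtain ⟨hκ_ac, hκ_d⟩ := toughness_facts hK hmono hge hκ hT.le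
  have hw_ac : AbsolutelyContinuousOnInterval (fun t => u t 0) 0 T := by
    have : ContDiffOn ℝ 2 (fun t => u t 0) (uIcc 0 T) :=
      hu.comp (f := fun t : ℝ => ((t, 0) : ℝ × ℝ)) (by fun_prop) fun t ht => by
        rw [uIcc_of_le hT.le] at ht
        exact hmem0 t ht.1
    exact (this.of_le (by norm_num)).absolutelyContinuousOnInterval
  have hw_d : ∀ t, 0 ≤ t → HasDerivAt (fun t => u t 0) (pt u t 0) t := fun t ht =>
    (hasDerivAt_pt hU hu (hmem0 t ht)).differentiableAt.hasDerivAt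
  have hinv_ac := inv_absolutelyContinuous hl0 hK hmono hge hT.le
  have hformula : ∀ t ≥ (0:ℝ), Emod ε ℓ u t = En ε ℓ u 0
      - ν * (∫ τ in (0:ℝ)..t, ∫ σ in (0:ℝ)..ℓ τ, ε * (pt u τ σ) ^ 2)
      - (∫ σ in l0..ℓ t, κ σ) - (∫ τ in (0:ℝ)..t, pt u τ 0 * px u τ 0)
      - (1/2) * (u t 0 * u t 0 * (ℓ t)⁻¹) := by
    intro t ht
    have h1 := hEmod t ht
    have h2 := hbal t ht
    simp only [Afr, Wk] at h2
    have h3 : (1/2) * (u t 0) ^ 2 / ℓ t = (1/2) * (u t 0 * u t 0 * (ℓ t)⁻¹) := by ring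
    rw [h3] at h1
    linarith
  have hac : AbsolutelyContinuousOnInterval (Emod ε ℓ u) 0 T := by
    have hconst : AbsolutelyContinuousOnInterval (fun _ : ℝ => En ε ℓ u 0) 0 T :=
      contDiffOn_const.absolutelyContinuousOnInterval
    refine absolutelyContinuousOnInterval_congr
      ((((hconst.sub (hA_ac.const_mul ν)).sub hκ_ac).sub hW_ac).sub
        (((hw_ac.mul hw_ac).mul hinv_ac).const_mul (1/2))) fun t ht => ?_
    rw [uIcc_of_le hT.le] at ht
    exact hformula t ht.1
  refine ⟨hEmod, ⟨hac.intervalIntegrable_deriv, fun t ht => ?_⟩, ?_⟩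
  · have hsub : uIcc 0 t ⊆ uIcc 0 T := by
      rw [uIcc_of_le ht.1, uIcc_of_le hT.le]
      exact Icc_subset_Icc_right ht.2
    rw [(hac.mono hsub).integral_deriv_eq_sub]
    ring
  · have hℓ_ac : AbsolutelyContinuousOnInterval ℓ 0 T :=
      (hK.mono (by rw [uIcc_of_le hT.le]; exact Icc_subset_Ici_self)).absolutelyContinuousOnInterval
    filter_upwards [hℓ_ac.ae_differentiableAt] with t hdiff ht
    have hdℓ : HasDerivAt ℓ (deriv ℓ t) t :=
      (hdiff (by rw [uIcc_of_le hT.le]; exact Ioo_subset_Icc_self ht)).hasDerivAt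
    have hd0 : 0 ≤ deriv ℓ t := by
      rw [← hdℓ.hasDerivWithinAt.derivWithin (s := Ici 0)
        ((uniqueDiffOn_Ici 0) t ht.1.le)]
      exact hmono.derivWithin_nonneg
    have hL := hpos t ht.1.le
    have hwt := hw_d t ht.1.le
    have hΦ := (((((hA_d t ht.1).const_mul ν).const_sub (En ε ℓ u 0)).sub
      (hκ_d t _ ht.1 hdℓ)).sub (hW_d t ht.1)).sub
        (((hwt.mul hwt).mul (hdℓ.inv hL.ne')).const_mul (1/2))
    have hE := hΦ.congr_of_eventuallyEq (f₁ := Emod ε ℓ u) (by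
      filter_upwards [Ioi_mem_nhds ht.1] with s hs using hformula s (le_of_lt hs))
    rw [hE.deriv]
    refine le_of_eq_of_le ?_ (derivative_bound (D := ν * ∫ σ in (0:ℝ)..ℓ t, ε * (pt u t σ) ^ 2)
      hl0 hM (hge t ht.1.le)
      (hw t (Ioo_subset_Icc_self ht)) hd0 (hκpos (ℓ t) (hge t ht.1.le)))
    simp only [Pi.mul_apply, Pi.inv_apply]
    field_simp
    ring
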